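/- arXiv:2305.18796 — 2 statements merged into one kernel-verified Lean document; each statement's English description precedes it below -/
import Mathlib

section
/- Let R be a Dedekind domain that is not a field such that Cl(R) is infinite and every class of Cl(R) contains infinitely many nonzero prime ideals of R. Let k ∈ ℕ, let 2 ≤ m_1 < … < m_k be integers, and let n_1, …, n_k ∈ ℕ. Then there exists a nonzero nonunit a ∈ R such that: (i) for each i ∈ {1, …, k}, the set of multisets S of cardinality m_i consisting of irreducible elements of the monoid of associate classes Associates(R) with product equal to the class of a in Associates(R) has at least n_i elements (i.e., a has at least n_i essentially distinct factorizations of length m_i); and (ii) every factorization of a into irreducible elements of R has length in {m_1, …, m_k}, i.e., L(a) = {m_1, …, m_k}. -/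
open scoped nonZeroDivisors

/-- The set of lengths `L(a)` of `a`: the set of all `k` such that `a` is a product of `k`
irreducible elements. -/
def setOfLengths {R : Type*} [CommMonoid R] (a : R) : Set ℕ :=
  {k | ∃ s : Multiset R, (∀ u ∈ s, Irreducible u) ∧ Multiset.card s = k ∧ s.prod = a}

set_option linter.unusedSectionVars false

section GridCombinatorics

variable {D : Type} [Fintype D] [DecidableEq D] {α : D → Type}

/-- A predicate on a finite product, stable under changing one coordinate, is constant. -/
theorem pf_invariant (Q : (∀ d, α d) → Prop)
    (h : ∀ x d a, Q x → Q (Function.update x d a)) (x y : ∀ d, α d) (hx : Q x) : Q y := by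
  classical
  have key : ∀ s : Finset D, Q (s.piecewise y x) := by
    intro s
    induction s using Finset.induction with
    | empty => simpa using hx
    | insert j s hj ih =>
      rw [Finset.piecewise_insert]
      exact h _ _ _ ih
  simpa using key Finset.univ

/-- Same, fixing the coordinate `p`. -/
theorem pf_invariant_at (p : D) (Q : (∀ d, α d) → Prop)
    (h : ∀ x d a, d ≠ p → Q x → Q (Function.update x d a)) (x y : ∀ d, α d)
    (hxy : x p = y p) (hx : Q x) : Q y := by
  have := pf_invariant (fun z => Q (Function.update z p (x p))) (by
    intro z d a hz
    by_cases hd : d = p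
    · subst hd
      simpa using hz
    · rw [Function.update_comm hd]
      exact h _ _ _ hd hz) x y (by simpa using hx)
  rw [hxy] at this
  simpa using this

/-- The parity condition on rectangles. -/
def PFCode0 (A : Finset (∀ d, α d)) : Prop :=
  ∀ (p q : D), p ≠ q → ∀ (w : ∀ d, α d) (a : α p) (b : α q),
    ((w ∈ A ↔ Function.update w p a ∈ A) ↔
      (Function.update w q b ∈ A ↔ Function.update (Function.update w q b) p a ∈ A))

/-- Toggling behaviour depends only on the coordinate which is changed. -/
def PFCode (A : Finset (∀ d, α d)) : Prop :=
  ∀ (p : D) (a : α p) (x y : ∀ d, α d), x p = y p →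
    ((x ∈ A ↔ Function.update x p a ∈ A) ↔ (y ∈ A ↔ Function.update y p a ∈ A))

theorem PFCode0.code {A : Finset (∀ d, α d)} (hA : PFCode0 A) : PFCode A := by
  intro p a x y hxy
  refine pf_invariant_at p (fun z => ((x ∈ A ↔ Function.update x p a ∈ A) ↔
    (z ∈ A ↔ Function.update z p a ∈ A))) ?_ x y hxy Iff.rfl
  intro z d b hd hz
  exact hz.trans (hA p d (Ne.symm hd) z a b)

/-- The coordinate `p` is active for `A`. -/
def PFAct (A : Finset (∀ d, α d)) (p : D) : Prop :=
  ∃ (x : ∀ d, α d) (a : α p), ¬ (x ∈ A ↔ Function.update x p a ∈ A)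

theorem pf_act_transfer {A B : Finset (∀ d, α d)} (hA : PFCode A)
    (hAB : Disjoint A B) (hB : B.Nonempty) {p : D} (hp : PFAct A p) : PFAct B p := by
  by_contra hn
  obtain ⟨x, a, hx⟩ := hp
  obtain ⟨y, hy⟩ := hB
  have hn' : ∀ (z : ∀ d, α d) (c : α p), (z ∈ B ↔ Function.update z p c ∈ B) := by
    intro z c
    by_contra h
    exact hn ⟨z, c, h⟩
  have h1 := (hn' y (x p)).1 hy
  have h2 := (hn' _ a).1 h1
  have h3 := hA p a x (Function.update y p (x p)) (by simp)
  exact hx (h3.2 ⟨fun h => absurd h1 (Finset.disjoint_left.1 hAB h),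
    fun h => absurd h2 (Finset.disjoint_left.1 hAB h)⟩)

theorem pf_half {A B : Finset (∀ d, α d)} (hA : PFCode A) (hB : PFCode B)
    (hAB : Disjoint A B) {p q : D} (hpq : p ≠ q) (hp : PFAct B p) (hq : PFAct B q)
    (x : ∀ d, α d) (r : D) (a : α r) (hBx : x ∈ B ↔ Function.update x r a ∈ B) :
    (x ∈ A ↔ Function.update x r a ∈ A) := by
  obtain ⟨q', hq'r, z, c, hz⟩ : ∃ q', q' ≠ r ∧ PFAct B q' := by
    by_cases h : p = r
    · exact ⟨q, fun h' => hpq (h.trans h'.symm), hq⟩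
    · exact ⟨p, h, hp⟩
  obtain ⟨y, hyB, hyr⟩ : ∃ y, y ∈ B ∧ y r = x r := by
    have h1 := hB q' c z (Function.update x q' (z q')) (by simp)
    by_cases h2 : Function.update x q' (z q') ∈ B
    · exact ⟨_, h2, by simp [Function.update_of_ne hq'r.symm]⟩
    · refine ⟨Function.update (Function.update x q' (z q')) q' c, ?_, by
        simp [Function.update_of_ne hq'r.symm]⟩
      by_contra h3
      exact hz (h1.2 ⟨fun h => absurd h h2, fun h => absurd h h3⟩)
  have h4 := ((hB r a y x hyr).2 hBx).1 hyB
  exact (hA r a y x hyr).1 ⟨fun h => absurd hyB (Finset.disjoint_left.1 hAB h),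
    fun h => absurd h4 (Finset.disjoint_left.1 hAB h)⟩

theorem pf_act_unique {A B : Finset (∀ d, α d)} (hA : PFCode A) (hB : PFCode B)
    (hAB : Disjoint A B) (hAn : A.Nonempty) (hBn : B.Nonempty)
    (hU : ∃ x, x ∉ A ∧ x ∉ B) {p q : D} (hp : PFAct A p) (hq : PFAct A q) : q = p := by
  by_contra hne
  obtain ⟨u, huA, huB⟩ := hU
  obtain ⟨v, hv⟩ := hAn
  have hp' := pf_act_transfer hA hAB hBn hp
  have hq' := pf_act_transfer hA hAB hBn hq
  have : u ∈ A ∨ u ∈ B := by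
    refine pf_invariant (fun x => x ∈ A ∨ x ∈ B) ?_ v u (Or.inl hv)
    intro x d a hx
    have h1 := pf_half hA hB hAB hne hq' hp' x d a
    have h2 := pf_half hB hA hAB.symm hne hq hp x d a
    have h3 : x ∈ A → x ∉ B := fun h => Finset.disjoint_left.1 hAB h
    have h4 : Function.update x d a ∈ A → Function.update x d a ∉ B :=
      fun h => Finset.disjoint_left.1 hAB h
    tauto
  tauto

theorem pf_act_exists {A : Finset (∀ d, α d)} (hAn : A.Nonempty) (hU : ∃ x, x ∉ A) :
    ∃ p, PFAct A p := by
  by_contra hn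
  obtain ⟨u, hu⟩ := hU
  obtain ⟨v, hv⟩ := hAn
  refine hu (pf_invariant (fun x => x ∈ A) ?_ v u hv)
  intro x d a hx
  by_contra h
  exact hn ⟨d, x, a, fun h' => h (h'.1 hx)⟩

theorem pf_only {A : Finset (∀ d, α d)} {p : D} (h : ∀ q, PFAct A q → q = p)
    {x y : ∀ d, α d} (hxy : x p = y p) (hx : x ∈ A) : y ∈ A := by
  refine pf_invariant_at p (fun x => x ∈ A) ?_ x y hxy hx
  intro x d a hd hx
  by_contra hh
  exact hd (h d ⟨x, a, fun h' => hh (h'.1 hx)⟩)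

variable [∀ d, Fintype (α d)] [∀ d, DecidableEq (α d)]

/-- The slices of the grid. -/
def pfSlice (p : D) (a : α p) : Finset (∀ d, α d) := Finset.univ.filter (fun x => x p = a)

@[simp] theorem mem_pfSlice {p : D} {a : α p} {x : ∀ d, α d} : x ∈ pfSlice p a ↔ x p = a := by
  simp [pfSlice]

theorem pfSlice_act {p q : D} {a : α p} (h : PFAct (pfSlice p a) q) : q = p := by
  by_contra hne
  obtain ⟨x, b, hx⟩ := h
  apply hx
  simp [Function.update_of_ne (Ne.symm hne)]

open scoped Pointwise in
/-- Families of group elements on the grid in general position. -/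
theorem pf_generic (G : Type*) [CommGroup G] [Infinite G] :
    ∃ g : (∀ d, α d) → G, (∀ p a, ∏ x ∈ pfSlice p a, g x = 1) ∧
      ∀ A : Finset (∀ d, α d), ∏ x ∈ A, g x = 1 → PFCode A := by
  classical
  let H : Subgroup ((∀ d, α d) → G) :=
    { carrier := {g | ∀ p a, ∏ x ∈ pfSlice p a, g x = 1}
      mul_mem' := by
        intro f g hf hg p a
        simp only [Pi.mul_apply, Finset.prod_mul_distrib]
        rw [hf p a, hg p a, one_mul]
      one_mem' := by intro p a; simp
      inv_mem' := by
        intro f hf p a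
        simp only [Pi.inv_apply, Finset.prod_inv_distrib]
        rw [hf p a, inv_one] }
  let ev : Finset (∀ d, α d) → (H →* G) := fun A =>
    { toFun := fun g => ∏ x ∈ A, g.1 x
      map_one' := by simp
      map_mul' := by intro f g; simp [Finset.prod_mul_distrib] }
  by_contra hcon
  push Not at hcon
  let S : Finset (Finset (∀ d, α d)) := Finset.univ.filter (fun A => ¬ PFCode A)
  have hcov : ⋃ A ∈ S, ((1 : H) • ((ev A).ker : Set H)) = Set.univ := by
    rw [Set.eq_univ_iff_forall]
    intro g
    obtain ⟨A, hA, hA'⟩ := hcon g.1 g.2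
    simp only [Set.mem_iUnion]
    refine ⟨A, by simp [S, hA'], ?_⟩
    rw [one_smul]
    exact hA
  obtain ⟨A, hAS, hfin⟩ := Subgroup.exists_finiteIndex_of_leftCoset_cover
    (g := fun _ => (1 : H)) hcov
  have hA : ¬ PFCode0 A := fun h => (Finset.mem_filter.1 hAS).2 h.code
  have hfr : Finite (ev A).range := by
    have : Finite (H ⧸ (ev A).ker) := inferInstance
    exact Finite.of_equiv _ (QuotientGroup.quotientKerEquivRange (ev A)).toEquiv
  unfold PFCode0 at hA
  push Not at hA
  have hA : ∃ p q : D, p ≠ q ∧ ∃ (w : ∀ d, α d) (a : α p) (b : α q),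
    ¬ ((w ∈ A ↔ Function.update w p a ∈ A) ↔
      (Function.update w q b ∈ A ↔ Function.update (Function.update w q b) p a ∈ A)) := by
    by_contra hh
    push Not at hh
    obtain ⟨p, q, hpq, w, a, b, h⟩ := hA
    have := hh p q hpq w a b
    tauto
  obtain ⟨p, q, hpq, w, a, b, hw⟩ := hA
  let f : G → (∀ d, α d) → G := fun t =>
    Pi.mulSingle w t * (Pi.mulSingle (Function.update w p a) t)⁻¹ *
      ((Pi.mulSingle (Function.update w q b) t)⁻¹ *
        Pi.mulSingle (Function.update (Function.update w q b) p a) t)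
  have hf : ∀ t (B : Finset (∀ d, α d)), ∏ x ∈ B, f t x =
      (if w ∈ B then t else 1) * (if Function.update w p a ∈ B then t else 1)⁻¹ *
      ((if Function.update w q b ∈ B then t else 1)⁻¹ *
        (if Function.update (Function.update w q b) p a ∈ B then t else 1)) := by
    intro t B
    simp only [f, Pi.mul_apply, Pi.inv_apply, Finset.prod_mul_distrib, Finset.prod_inv_distrib,
      Finset.prod_pi_mulSingle']
  have hfH : ∀ t, f t ∈ H := by
    intro t r c
    rw [hf]
    simp only [mem_pfSlice]
    by_cases h1 : r = p
    · subst h1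
      simp only [Function.update_self, Function.update_of_ne hpq]
      split_ifs <;> simp
    · by_cases h2 : r = q
      · subst h2
        simp only [Function.update_self, Function.update_of_ne h1]
        split_ifs <;> simp
      · simp only [Function.update_of_ne h1, Function.update_of_ne h2]
        split_ifs <;> simp
  have hmem : ∀ t, t ∈ (ev A).range := by
    intro t
    have h1 : ∏ x ∈ A, f t x ∈ (ev A).range := ⟨⟨f t, hfH t⟩, rfl⟩
    have h2 : ∏ x ∈ A, f t x = t ∨ ∏ x ∈ A, f t x = t⁻¹ := by
      rw [hf]
      by_cases c1 : w ∈ A <;> by_cases c2 : Function.update w p a ∈ A <;>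
        by_cases c3 : Function.update w q b ∈ A <;>
        by_cases c4 : Function.update (Function.update w q b) p a ∈ A <;>
        simp [c1, c2, c3, c4] at hw ⊢
    rcases h2 with h2 | h2
    · rwa [h2] at h1
    · rw [h2] at h1
      simpa using inv_mem h1
  have : Finite G := Finite.of_injective (fun t => (⟨t, hmem t⟩ : (ev A).range))
    (fun s t h => congrArg Subtype.val h)
  exact not_finite G

end GridCombinatorics

section GridPartition

variable {D : Type} [Fintype D] [DecidableEq D] {α : D → Type}
  [∀ d, Fintype (α d)] [∀ d, DecidableEq (α d)] [∀ d, Nontrivial (α d)]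

theorem pf_slice_nonempty (p : D) (a : α p) : (pfSlice p a).Nonempty :=
  ⟨Function.update (fun d => Classical.arbitrary (α d)) p a, by simp⟩

theorem pf_slice_min {p : D} {a : α p} {B : Finset (∀ d, α d)}
    (hBs : B ⊆ pfSlice p a) (hB : PFCode B) (hBn : B.Nonempty) : B = pfSlice p a := by
  obtain ⟨a', ha'⟩ := exists_ne a
  have hd : Disjoint B (pfSlice p a') := by
    rw [Finset.disjoint_left]
    intro x hx hx'
    exact ha' ((mem_pfSlice.1 hx').symm.trans (mem_pfSlice.1 (hBs hx)))
  have hact : ∀ q, PFAct B q → q = p := fun q hq =>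
    pfSlice_act (pf_act_transfer hB hd (pf_slice_nonempty p a') hq)
  refine hBs.antisymm fun x hx => ?_
  obtain ⟨z, hz⟩ := hBn
  exact pf_only hact ((mem_pfSlice.1 (hBs hz)).trans (mem_pfSlice.1 hx).symm) hz

theorem pf_slice_inj {p q : D} {a : α p} {b : α q} (h : pfSlice p a = pfSlice q b) : p = q := by
  by_contra hne
  obtain ⟨b', hb'⟩ := exists_ne b
  obtain ⟨x, hx⟩ := pf_slice_nonempty (α := α) p a
  have h1 : Function.update x q b' ∈ pfSlice p a := by
    rw [mem_pfSlice, Function.update_of_ne hne]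
    exact mem_pfSlice.1 hx
  rw [h, mem_pfSlice, Function.update_self] at h1
  exact hb' h1

theorem pf_count (p : D) (T : Multiset (Finset (∀ d, α d)))
    (hT : ∀ A ∈ T, ∃ a, A = pfSlice p a)
    (hsum : (T.map Finset.val).sum = (Finset.univ : Finset (∀ d, α d)).val) :
    Multiset.card T = Fintype.card (α p) := by
  classical
  let o : ∀ d, α d := fun d => Classical.arbitrary (α d)
  let φ := Multiset.countPAddMonoidHom (fun x : ∀ d, α d => x = Function.update o p (x p))
  have h1 := congrArg φ hsum
  rw [map_multiset_sum, Multiset.map_map] at h1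
  have h2 : T.map (φ ∘ Finset.val) = T.map (fun _ => 1) := by
    refine Multiset.map_congr rfl fun A hA => ?_
    obtain ⟨a, rfl⟩ := hT A hA
    have : (pfSlice p a).filter (fun x => x = Function.update o p (x p)) =
        {Function.update o p a} := by
      ext x
      simp only [Finset.mem_filter, mem_pfSlice, Finset.mem_singleton]
      constructor
      · rintro ⟨rfl, h⟩
        exact h
      · rintro rfl
        simp
    simp only [Function.comp, φ, Multiset.coe_countPAddMonoidHom, Multiset.countP_eq_card_filter]
    exact (congrArg Finset.card this).trans (by simp)
  have h3 : φ (Finset.univ : Finset (∀ d, α d)).val = Fintype.card (α p) := by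
    have : (Finset.univ : Finset (∀ d, α d)).filter (fun x => x = Function.update o p (x p)) =
        Finset.univ.image (fun a => Function.update o p a) := by
      ext x
      simp only [Finset.mem_filter, Finset.mem_image, Finset.mem_univ, true_and]
      constructor
      · intro h
        exact ⟨x p, h.symm⟩
      · rintro ⟨a, rfl⟩
        simp
    simp only [φ, Multiset.coe_countPAddMonoidHom, Multiset.countP_eq_card_filter]
    refine (congrArg Finset.card this).trans ?_
    rw [Finset.card_image_of_injective _ (Function.update_injective o p), Finset.card_univ]
  rw [h2, h3] at h1
  simpa using h1

theorem pf_comb [Nonempty D] (T : Multiset (Finset (∀ d, α d)))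
    (hcode : ∀ A ∈ T, PFCode A) (hne : ∀ A ∈ T, A.Nonempty)
    (hmin : ∀ A ∈ T, ∀ p a, pfSlice p a ⊆ A → pfSlice p a = A)
    (hsum : (T.map Finset.val).sum = (Finset.univ : Finset (∀ d, α d)).val) :
    Multiset.card T = 2 ∨ ∃ d, Multiset.card T = Fintype.card (α d) := by
  classical
  -- pairs of members are disjoint
  have hdisj : ∀ A B T', T = A ::ₘ B ::ₘ T' → Disjoint A B := by
    intro A B T' h
    have hn : (Finset.univ : Finset (∀ d, α d)).val.Nodup := Finset.univ.nodup
    rw [← hsum, h] at hn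
    simp only [Multiset.map_cons, Multiset.sum_cons, ← add_assoc] at hn
    have := (Multiset.nodup_add.1 (Multiset.nodup_add.1 hn).1).2.2
    exact Finset.disjoint_val.1 this
  have hdisj3 : ∀ A B T', T = A ::ₘ B ::ₘ T' → T' ≠ 0 → ∃ x, x ∉ A ∧ x ∉ B := by
    intro A B T' h hT'
    obtain ⟨C, hC⟩ := Multiset.exists_mem_of_ne_zero hT'
    obtain ⟨T'', rfl⟩ := Multiset.exists_cons_of_mem hC
    obtain ⟨x, hx⟩ := hne C (by simp [h])
    refine ⟨x, fun hA => ?_, fun hB => ?_⟩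
    · exact Finset.disjoint_left.1 (hdisj A C (B ::ₘ T'') (by
        rw [h, Multiset.cons_swap B C])) hA hx
    · exact Finset.disjoint_left.1 (hdisj B C (A ::ₘ T'') (by
        rw [h, Multiset.cons_swap A B, Multiset.cons_swap A C])) hB hx
  have hslice : ∀ A ∈ T, ∀ p, (∀ q, PFAct A q → q = p) → ∃ a, A = pfSlice p a := by
    intro A hA p hp
    obtain ⟨z, hz⟩ := hne A hA
    refine ⟨z p, (hmin A hA p (z p) fun x hx => ?_).symm⟩
    exact pf_only hp (mem_pfSlice.1 hx).symm hz
  let o : ∀ d, α d := fun d => Classical.arbitrary (α d)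
  obtain ⟨d0⟩ := ‹Nonempty D›
  rcases T.empty_or_exists_mem with h0 | ⟨A, hA⟩
  · exfalso
    have : o ∈ (Finset.univ : Finset (∀ d, α d)).val := Finset.mem_univ o
    rw [← hsum, h0] at this
    simp at this
  obtain ⟨T1, hT1⟩ := Multiset.exists_cons_of_mem hA
  rcases T1.empty_or_exists_mem with h0 | ⟨B, hB⟩
  · exfalso
    rw [hT1, h0] at hsum
    simp only [Multiset.map_cons, Multiset.map_zero, Multiset.sum_cons, Multiset.sum_zero,
      add_zero] at hsum
    have hAu : A = Finset.univ := Finset.val_injective hsum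
    have := hmin A hA d0 (o d0) (by rw [hAu]; exact Finset.subset_univ _)
    obtain ⟨b, hb⟩ := exists_ne (o d0)
    have h1 : Function.update o d0 b ∈ pfSlice d0 (o d0) := by
      rw [this, hAu]; exact Finset.mem_univ _
    rw [mem_pfSlice, Function.update_self] at h1
    exact hb h1
  obtain ⟨T2, rfl⟩ := Multiset.exists_cons_of_mem hB
  by_cases hT2 : T2 = 0
  · left
    simp [hT1, hT2]
  right
  have hall : ∀ B' ∈ B ::ₘ T2, B' ∈ T ∧ Disjoint A B' ∧ ∃ x, x ∉ A ∧ x ∉ B' := by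
    intro B' hB'
    obtain ⟨T3, hT3⟩ := Multiset.exists_cons_of_mem hB'
    have hc : Multiset.card T3 = Multiset.card T2 := by
      have := congrArg Multiset.card hT3
      simpa using this.symm
    have h3 : T3 ≠ 0 := by
      intro h
      apply hT2
      rw [h] at hc
      exact Multiset.card_eq_zero.1 (by simpa using hc.symm)
    rw [hT3] at hT1
    exact ⟨by simp [hT1], hdisj A B' T3 hT1, hdisj3 A B' T3 hT1 h3⟩
  obtain ⟨hBT, hAB, x, hxA, hxB⟩ := hall B (by simp)
  obtain ⟨p, hp⟩ := pf_act_exists (hne A hA) ⟨x, hxA⟩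
  refine ⟨p, pf_count p T (fun E hE => ?_) hsum⟩
  rw [hT1, Multiset.mem_cons] at hE
  rcases hE with rfl | hE
  · refine hslice _ hA p fun q hq => ?_
    exact pf_act_unique (hcode _ hA) (hcode B hBT) hAB (hne _ hA) (hne B hBT) ⟨x, hxA, hxB⟩ hp hq
  · obtain ⟨hET, hAE, hx'⟩ := hall E hE
    refine hslice _ hET p fun q hq => ?_
    refine pf_act_unique (hcode _ hA) (hcode E hET) hAE (hne _ hA) (hne E hET) hx' hp ?_
    exact pf_act_transfer (hcode E hET) hAE.symm (hne _ hA) hq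

end GridPartition

/-- Realizing zero-sum subsets by elements of a Dedekind domain. -/
theorem pf_ring {R : Type*} [CommRing R] [IsDedekindDomain R]
    (hprimes : ∀ g : ClassGroup R,
      {P : (Ideal R)⁰ | (P : Ideal R).IsPrime ∧ ClassGroup.mk0 P = g}.Infinite)
    {X : Type} [Fintype X] [DecidableEq X] (g : X → ClassGroup R) :
    ∃ r : Finset X → Associates R,
      (∀ A, ∏ x ∈ A, g x = 1 → r A ≠ 0) ∧
      (∀ A B, ∏ x ∈ A, g x = 1 → ∏ x ∈ B, g x = 1 → r A = r B → A = B) ∧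
      (∀ A B, ∏ x ∈ A, g x = 1 → ∏ x ∈ B, g x = 1 → Disjoint A B → r (A ∪ B) = r A * r B) ∧
      (∀ A u v, ∏ x ∈ A, g x = 1 → u * v = r A → ∃ B C, ∏ x ∈ B, g x = 1 ∧ ∏ x ∈ C, g x = 1 ∧
        Disjoint B C ∧ B ∪ C = A ∧ u = r B ∧ v = r C) ∧
      r ∅ = 1 := by
  classical
  let F : ClassGroup R → ℕ → (Ideal R)⁰ := fun c i => ((hprimes c).natEmbedding _ i).1
  have hFp : ∀ c i, (F c i : Ideal R).IsPrime := fun c i => ((hprimes c).natEmbedding _ i).2.1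
  have hFc : ∀ c i, ClassGroup.mk0 (F c i) = c := fun c i => ((hprimes c).natEmbedding _ i).2.2
  have hFi : ∀ c i j, F c i = F c j → i = j := fun c i j h =>
    ((hprimes c).natEmbedding _).injective (Subtype.ext h)
  let P : X → (Ideal R)⁰ := fun x => F (g x) (Fintype.equivFin X x)
  have hPinj : Function.Injective P := by
    intro x y h
    have h1 : g x = g y := by
      have := congrArg ClassGroup.mk0 h
      simpa only [P, hFc] using this
    have h2 : F (g x) (Fintype.equivFin X x) = F (g y) (Fintype.equivFin X y) := h
    rw [h1] at h2
    exact (Fintype.equivFin X).injective (Fin.ext (hFi _ _ _ h2))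
  have hPc : ∀ x, ClassGroup.mk0 (P x) = g x := fun x => hFc _ _
  have hP0 : ∀ x, (P x : Ideal R) ≠ ⊥ := fun x => nonZeroDivisors.coe_ne_zero (P x)
  have hPp : ∀ x, Prime (P x : Ideal R) := fun x =>
    (Ideal.prime_iff_isPrime (hP0 x)).2 (hFp _ _)
  let I : Finset X → Ideal R := fun A => ∏ x ∈ A, (P x : Ideal R)
  have hI0 : ∀ A, I A ≠ 0 := fun A => Finset.prod_ne_zero_iff.2 fun x _ => hP0 x
  have hIinj' : ∀ A B, I A = I B → A ⊆ B := by
    intro A B h x hx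
    have h1 : (P x : Ideal R) ∣ I B := h ▸ Finset.dvd_prod_of_mem _ hx
    obtain ⟨y, hy, hxy⟩ := ((hPp x).dvd_finsetProd_iff _).1 h1
    have h2 := associated_iff_eq.1 ((hPp x).associated_of_dvd (hPp y) hxy)
    rwa [hPinj (Subtype.ext h2)]
  have hIinj : ∀ A B, I A = I B → A = B := fun A B h =>
    (hIinj' A B h).antisymm (hIinj' B A h.symm)
  have hprin : ∀ A, ∏ x ∈ A, g x = 1 ↔ (I A).IsPrincipal := by
    intro A
    rw [← ClassGroup.mk0_eq_one_iff (mem_nonZeroDivisors_of_ne_zero (hI0 A))]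
    have : (⟨I A, mem_nonZeroDivisors_of_ne_zero (hI0 A)⟩ : (Ideal R)⁰) = ∏ x ∈ A, P x := by
      apply Subtype.ext
      simp [I]
    rw [this, map_prod]
    simp only [hPc]
  have hex : ∀ A, ∃ t : R, ∏ x ∈ A, g x = 1 → Ideal.span {t} = I A := by
    intro A
    by_cases h : ∏ x ∈ A, g x = 1
    · obtain ⟨t, ht⟩ := (hprin A).1 h
      exact ⟨t, fun _ => ht.symm⟩
    · exact ⟨0, fun h' => absurd h' h⟩
  choose r hr using hex
  have hspan : ∀ s t : R, Associates.mk s = Associates.mk t ↔ Ideal.span {s} = Ideal.span {t} := by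
    intro s t
    rw [Associates.mk_eq_mk_iff_associated, Ideal.span_singleton_eq_span_singleton]
  refine ⟨fun A => Associates.mk (r A), ?_, ?_, ?_, ?_, ?_⟩
  · intro A hA h
    have h1 := hr A hA
    rw [Associates.mk_eq_zero] at h
    rw [h] at h1
    exact hI0 A (by rw [← h1]; simp)
  · intro A B hA hB h
    simp only [hspan, hr A hA, hr B hB] at h
    exact hIinj _ _ h
  · intro A B hA hB hAB
    rw [Associates.mk_mul_mk, hspan, hr _ (by rw [Finset.prod_union hAB, hA, hB, one_mul]),
      ← Ideal.span_singleton_mul_span_singleton, hr A hA, hr B hB]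
    exact Finset.prod_union hAB
  · intro A u v hA huv
    obtain ⟨u, rfl⟩ := Associates.mk_surjective u
    obtain ⟨v, rfl⟩ := Associates.mk_surjective v
    rw [Associates.mk_mul_mk, hspan, hr A hA, ← Ideal.span_singleton_mul_span_singleton] at huv
    obtain ⟨B, C, b, c, hBC, hd, hbc, hB, hC⟩ := mul_eq_mul_prime_prod
      (x := Ideal.span {u}) (y := Ideal.span {v}) (a := (1 : Ideal R)) (s := A) (p := fun x => (P x : Ideal R)) (fun x _ => hPp x)
      (by rw [one_mul]; exact huv)
    have hb : b = 1 := associated_iff_eq.1 (associated_one_iff_isUnit.2 (.of_mul_eq_one _ hbc.symm))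
    have hc : c = 1 := by simpa [hb] using hbc.symm
    rw [hb, one_mul] at hB
    rw [hc, one_mul] at hC
    have hB1 : ∏ x ∈ B, g x = 1 := (hprin B).2 ⟨u, hB.symm⟩
    have hC1 : ∏ x ∈ C, g x = 1 := (hprin C).2 ⟨v, hC.symm⟩
    refine ⟨B, C, hB1, hC1, hd, hBC, ?_, ?_⟩
    · rw [hspan, hr B hB1]; exact hB
    · rw [hspan, hr C hC1]; exact hC
  · rw [← Associates.mk_one, hspan, hr ∅ (by simp)]
    simp [I]

theorem pf_core {R : Type*} [CommRing R] [IsDedekindDomain R] [Infinite (ClassGroup R)]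
    (hprimes : ∀ g : ClassGroup R,
      {P : (Ideal R)⁰ | (P : Ideal R).IsPrime ∧ ClassGroup.mk0 P = g}.Infinite)
    {D : Type} [Fintype D] [DecidableEq D] [Nonempty D] (M : D → ℕ) (hM : ∀ d, 2 ≤ M d) :
    ∃ a : Associates R, a ≠ 0 ∧ a ≠ 1 ∧
      (∃ F : D → Multiset (Associates R), Function.Injective F ∧
        ∀ d, (∀ u ∈ F d, Irreducible u) ∧ Multiset.card (F d) = M d ∧ (F d).prod = a) ∧
      ∀ s : Multiset (Associates R), (∀ u ∈ s, Irreducible u) → s.prod = a →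
        Multiset.card s = 2 ∨ ∃ d, Multiset.card s = M d := by
  classical
  have : ∀ d, Nontrivial (Fin (M d)) := fun d => Fin.nontrivial_iff_two_le.2 (hM d)
  obtain ⟨g, hg1, hg2⟩ := pf_generic (α := fun d => Fin (M d)) (ClassGroup R)
  obtain ⟨r, hr0, hrinj, hrmul, hrdiv, hr1⟩ := pf_ring hprimes g
  have hZe : ∏ x ∈ (∅ : Finset (∀ d, Fin (M d))), g x = 1 := by simp
  have irr_ne : ∀ A, Irreducible (r A) → A.Nonempty := by
    intro A hA
    rw [Finset.nonempty_iff_ne_empty]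
    rintro rfl
    rw [hr1] at hA
    exact hA.not_isUnit isUnit_one
  have irr_min : ∀ A, ∏ x ∈ A, g x = 1 → Irreducible (r A) → ∀ B, B ⊆ A → ∏ x ∈ B, g x = 1 →
      B.Nonempty → B = A := by
    intro A hA hirr B hBA hB hBn
    have hC : ∏ x ∈ A \ B, g x = 1 := by
      have := Finset.prod_sdiff (f := g) hBA
      rwa [hB, mul_one, hA] at this
    have h1 := hrmul B (A \ B) hB hC Finset.disjoint_sdiff
    rw [Finset.union_sdiff_of_subset hBA] at h1
    rcases hirr.isUnit_or_isUnit h1 with h | h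
    · rw [Associates.isUnit_iff_eq_one, ← hr1] at h
      exact absurd (hrinj _ _ hB hZe h) hBn.ne_empty
    · rw [Associates.isUnit_iff_eq_one, ← hr1] at h
      exact hBA.antisymm (Finset.sdiff_eq_empty_iff_subset.1 (hrinj _ _ hC hZe h))
  have slice_irr : ∀ p a, Irreducible (r (pfSlice p a)) := by
    intro p a
    refine ⟨fun h => ?_, fun u v huv => ?_⟩
    · rw [Associates.isUnit_iff_eq_one, ← hr1] at h
      exact (pf_slice_nonempty (α := fun d => Fin (M d)) p a).ne_empty
        (hrinj _ _ (hg1 p a) hZe h)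
    · obtain ⟨B, C, hB, hC, hd, hBC, rfl, rfl⟩ := hrdiv _ u v (hg1 p a) huv.symm
      rcases B.eq_empty_or_nonempty with rfl | hBn
      · left; rw [hr1]; exact isUnit_one
      · right
        have h1 := pf_slice_min (hBC ▸ Finset.subset_union_left) (hg2 B hB) hBn
        have h2 : C = ∅ := by
          have h3 : C ⊆ B := by rw [h1, ← hBC]; exact Finset.subset_union_right
          exact Finset.disjoint_self_iff_empty C |>.1 (hd.mono_left h3)
        rw [h2, hr1]; exact isUnit_one
  have hpart : ∀ (d : D) (S : Finset (Fin (M d))),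
      ∏ x ∈ Finset.univ.filter (fun x : ∀ d, Fin (M d) => x d ∈ S), g x = 1 ∧
      r (Finset.univ.filter (fun x : ∀ d, Fin (M d) => x d ∈ S)) =
        ∏ a ∈ S, r (pfSlice d a) := by
    intro d S
    induction S using Finset.induction with
    | empty => simp [hr1]
    | insert a S ha ih =>
      have h1 : Finset.univ.filter (fun x : ∀ d, Fin (M d) => x d ∈ insert a S) =
          pfSlice d a ∪ Finset.univ.filter (fun x : ∀ d, Fin (M d) => x d ∈ S) := by
        ext x; simp
      have h2 : Disjoint (pfSlice d a)
          (Finset.univ.filter (fun x : ∀ d, Fin (M d) => x d ∈ S)) := by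
        rw [Finset.disjoint_left]
        intro x hx hx'
        rw [mem_pfSlice] at hx
        rw [Finset.mem_filter, hx] at hx'
        exact ha hx'.2
      rw [h1]
      constructor
      · rw [Finset.prod_union h2, hg1, ih.1, one_mul]
      · rw [hrmul _ _ (hg1 d a) ih.1 h2, ih.2, Finset.prod_insert ha]
  have hpartu : ∀ d, ∏ x, g x = 1 ∧ r Finset.univ = ∏ a, r (pfSlice d a) := by
    intro d
    simpa using hpart d Finset.univ
  have hZu : ∏ x, g x = 1 := (hpartu (Classical.arbitrary D)).1
  have hdecomp : ∀ (s : Multiset (Associates R)) A, ∏ x ∈ A, g x = 1 → s.prod = r A →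
      ∃ T : Multiset (Finset (∀ d, Fin (M d))), T.map r = s ∧ (∀ B ∈ T, ∏ x ∈ B, g x = 1) ∧
        (T.map Finset.val).sum = A.val := by
    intro s
    induction s using Multiset.induction with
    | empty =>
      intro A hA h
      refine ⟨0, by simp, by simp, ?_⟩
      rw [Multiset.prod_zero, ← hr1] at h
      rw [← hrinj _ _ hZe hA h]
      simp
    | cons u s ih =>
      intro A hA h
      rw [Multiset.prod_cons] at h
      obtain ⟨B, C, hB, hC, hd, hBC, rfl, hv⟩ := hrdiv A _ _ hA h
      obtain ⟨T, hT1, hT2, hT3⟩ := ih C hC hv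
      refine ⟨B ::ₘ T, by simp [hT1], ?_, ?_⟩
      · intro E hE
        rcases Multiset.mem_cons.1 hE with rfl | hE
        · exact hB
        · exact hT2 E hE
      · rw [Multiset.map_cons, Multiset.sum_cons, hT3, ← hBC,
          ← Finset.disjUnion_eq_union B C hd]
        rfl
  refine ⟨r Finset.univ, hr0 _ hZu, ?_, ?_, ?_⟩
  · intro h
    rw [← hr1] at h
    have := hrinj _ _ hZu hZe h
    exact (Finset.univ_nonempty (α := ∀ d, Fin (M d))).ne_empty this
  · refine ⟨fun d => (Finset.univ : Finset (Fin (M d))).val.map fun a => r (pfSlice d a), ?_, ?_⟩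
    · intro d e h
      have hmem : r (pfSlice d (Classical.arbitrary (Fin (M d)))) ∈
          (Finset.univ : Finset (Fin (M d))).val.map fun a => r (pfSlice d a) :=
        Multiset.mem_map_of_mem _ (Finset.mem_univ (Classical.arbitrary (Fin (M d))))
      simp only at h
      rw [h] at hmem
      obtain ⟨b, _, hb⟩ := Multiset.mem_map.1 hmem
      exact (pf_slice_inj (hrinj _ _ (hg1 _ _) (hg1 _ _) hb)).symm
    · intro d
      refine ⟨?_, by simp, (hpartu d).2.symm⟩
      intro u hu
      obtain ⟨b, _, rfl⟩ := Multiset.mem_map.1 hu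
      exact slice_irr _ _
  · intro s hs hprod
    obtain ⟨T, rfl, hT2, hT3⟩ := hdecomp s _ hZu hprod
    have hirr : ∀ A ∈ T, Irreducible (r A) := fun A hA => hs _ (Multiset.mem_map_of_mem r hA)
    have := pf_comb T (fun A hA => hg2 A (hT2 A hA)) (fun A hA => irr_ne A (hirr A hA))
      (fun A hA p a h => irr_min A (hT2 A hA) (hirr A hA) _ h (hg1 p a)
        (pf_slice_nonempty (α := fun d => Fin (M d)) p a))
      hT3
    simpa using this

/-- Lengths can be computed among associate classes. -/
theorem pf_lengths {R : Type*} [CommRing R] [IsDomain R] (a : R) (ha : ¬ IsUnit a) (l : ℕ) :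
    l ∈ setOfLengths a ↔ ∃ s : Multiset (Associates R), (∀ u ∈ s, Irreducible u) ∧
      Multiset.card s = l ∧ s.prod = Associates.mk a := by
  classical
  constructor
  · rintro ⟨s, h1, h2, h3⟩
    refine ⟨s.map Associates.mk, ?_, by simpa using h2, by rw [Associates.prod_mk, h3]⟩
    intro u hu
    obtain ⟨v, hv, rfl⟩ := Multiset.mem_map.1 hu
    exact Associates.irreducible_mk.2 (h1 v hv)
  · rintro ⟨s, h1, h2, h3⟩
    obtain ⟨t, rfl⟩ := Multiset.map_surjective_of_surjective Associates.mk_surjective s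
    have h1' : ∀ u ∈ t, Irreducible u := fun u hu =>
      Associates.irreducible_mk.1 (h1 _ (Multiset.mem_map_of_mem _ hu))
    rw [Associates.prod_mk, Associates.mk_eq_mk_iff_associated] at h3
    obtain ⟨c, hc⟩ := h3
    rcases t.empty_or_exists_mem with rfl | ⟨u, hu⟩
    · exfalso
      apply ha
      rw [← hc]
      simp
    · obtain ⟨t', rfl⟩ := Multiset.exists_cons_of_mem hu
      refine ⟨(u * c) ::ₘ t', ?_, by simpa using h2, ?_⟩
      · intro v hv
        rcases Multiset.mem_cons.1 hv with rfl | hv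
        · exact (irreducible_mul_units c).2 (h1' u (by simp))
        · exact h1' v (Multiset.mem_cons_of_mem hv)
      · rw [← hc, Multiset.prod_cons, Multiset.prod_cons]
        ring

theorem pf_shift {N : Type*} [CommMonoidWithZero N] [IsCancelMulZero N] [Subsingleton Nˣ] {q : N}
    (hq : Prime q) (t : ℕ) (a : N) (s : Multiset N) (hs : ∀ u ∈ s, Irreducible u)
    (h : s.prod = q ^ t * a) : ∃ s', s = s' + Multiset.replicate t q ∧ s'.prod = a := by
  induction t generalizing s with
  | zero => exact ⟨s, by simp, by simpa using h⟩
  | succ t ih =>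
    have hd : q ∣ s.prod := by
      rw [h, pow_succ', mul_assoc]
      exact dvd_mul_right _ _
    obtain ⟨u, hu, hqu⟩ := hq.exists_mem_multiset_dvd hd
    have hqu' : q = u := associated_iff_eq.1 (hq.irreducible.associated_of_dvd (hs u hu) hqu)
    subst hqu'
    obtain ⟨s1, rfl⟩ := Multiset.exists_cons_of_mem hu
    rw [Multiset.prod_cons, pow_succ', mul_assoc] at h
    obtain ⟨s', rfl, h'⟩ := ih s1 (fun v hv => hs v (Multiset.mem_cons_of_mem hv))
      (mul_left_cancel₀ hq.ne_zero h)
    exact ⟨s', by simp [Multiset.replicate_succ], h'⟩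

/-- **Corollary 4.4(2), quantitative form.** Let `R` be a Dedekind domain, not a field, with
infinite class group such that every class contains infinitely many nonzero prime ideals.
Given lengths `2 ≤ m 0 < m 1 < … < m (k-1)` and multiplicities `n i`, there is a nonzero
nonunit `a ∈ R` having at least `n i` essentially distinct factorizations of length `m i`
(distinct multisets of associate classes of irreducibles with product `a`), and whose set of
lengths is exactly `{m 0, …, m (k-1)}`. -/
theorem exists_element_with_prescribed_factorizations {R : Type*} [CommRing R]
    [IsDedekindDomain R] (hR : ¬ IsField R) (hinf : Infinite (ClassGroup R))
    (hprimes : ∀ g : ClassGroup R,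
      {P : (Ideal R)⁰ | (P : Ideal R).IsPrime ∧ ClassGroup.mk0 P = g}.Infinite)
    (k : ℕ) (hk : 0 < k) (m : Fin k → ℕ) (hm2 : ∀ i, 2 ≤ m i) (hmono : StrictMono m)
    (n : Fin k → ℕ) :
    ∃ a : R, a ≠ 0 ∧ ¬ IsUnit a ∧
      (∀ i : Fin k, (n i : Cardinal) ≤
        Cardinal.mk {s : Multiset (Associates R) |
          (∀ u ∈ s, Irreducible u) ∧ Multiset.card s = m i ∧ s.prod = Associates.mk a}) ∧
      setOfLengths a = Set.range m := by
  classical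
  have := hinf
  -- a prime element
  obtain ⟨q, hq⟩ : ∃ q : Associates R, Prime q := by
    obtain ⟨P, hP, hP1⟩ := (hprimes 1).nonempty
    have hP0 : (P : Ideal R) ≠ ⊥ := nonZeroDivisors.coe_ne_zero P
    obtain ⟨t, ht⟩ := (ClassGroup.mk0_eq_one_iff P.2).1 hP1
    have ht' : (P : Ideal R) = Ideal.span {t} := ht
    have ht0 : t ≠ 0 := by
      rintro rfl
      exact hP0 (by rw [ht']; simp)
    rw [ht', Ideal.span_singleton_prime ht0] at hP
    exact ⟨Associates.mk t, Associates.prime_mk.2 hP⟩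
  let i0 : Fin k := ⟨0, hk⟩
  have hi0 : ∀ i, m i0 ≤ m i := fun i => hmono.monotone (Fin.mk_le_of_le_val (Nat.zero_le _))
  have h20 := hm2 i0
  have : Nonempty (Σ i : Fin k, Fin (n i + 1)) := ⟨⟨i0, 0⟩⟩
  obtain ⟨a, ha0, ha1, ⟨F, hFinj, hF⟩, hlen⟩ := pf_core hprimes
    (D := Σ i : Fin k, Fin (n i + 1)) (fun d => m d.1 - (m i0 - 2))
    (fun d => by have := hi0 d.1; omega)
  obtain ⟨b, hb⟩ := Associates.mk_surjective (q ^ (m i0 - 2) * a)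
  have hcard : ∀ d : (Σ i : Fin k, Fin (n i + 1)), (∀ u ∈ F d +
      Multiset.replicate (m i0 - 2) q, Irreducible u) ∧
      Multiset.card (F d + Multiset.replicate (m i0 - 2) q) = m d.1 ∧
      (F d + Multiset.replicate (m i0 - 2) q).prod = Associates.mk b := by
    intro d
    obtain ⟨h1, h2, h3⟩ := hF d
    refine ⟨?_, ?_, ?_⟩
    · intro u hu
      rcases Multiset.mem_add.1 hu with hu | hu
      · exact h1 u hu
      · rw [Multiset.eq_of_mem_replicate hu]
        exact hq.irreducible
    · have := hi0 d.1
      rw [Multiset.card_add, Multiset.card_replicate, h2]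
      omega
    · rw [Multiset.prod_add, Multiset.prod_replicate, h3, hb, mul_comm]
  have hbu : ¬ IsUnit b := by
    intro h
    rw [← Associates.isUnit_mk, hb] at h
    have h1 := isUnit_of_mul_isUnit_right h
    exact ha1 (Associates.isUnit_iff_eq_one a |>.1 h1)
  refine ⟨b, ?_, hbu, ?_, ?_⟩
  · rw [← Associates.mk_ne_zero, hb]
    exact mul_ne_zero (pow_ne_zero _ hq.ne_zero) ha0
  · intro i
    have hinj : Function.Injective (fun j : Fin (n i) =>
        (⟨F ⟨i, j.castSucc⟩ + Multiset.replicate (m i0 - 2) q, hcard ⟨i, j.castSucc⟩⟩ :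
        {s : Multiset (Associates R) |
          (∀ u ∈ s, Irreducible u) ∧ Multiset.card s = m i ∧ s.prod = Associates.mk b})) := by
      intro j j' h
      have h1 := congrArg Subtype.val h
      have h2 := hFinj (add_right_cancel h1)
      simpa using h2
    have := Cardinal.mk_le_of_injective (Function.Injective.comp
      hinj (ULift.down_injective))
    rwa [Cardinal.mk_uLift, Cardinal.mk_fin, Cardinal.lift_natCast] at this
  · ext l
    rw [pf_lengths b hbu]
    constructor
    · rintro ⟨s, hs1, hs2, hs3⟩
      rw [hb] at hs3
      obtain ⟨s', rfl, hs'⟩ := pf_shift hq _ _ s hs1 hs3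
      rw [Multiset.card_add, Multiset.card_replicate] at hs2
      rcases hlen s' (fun u hu => hs1 u (Multiset.mem_add.2 (Or.inl hu))) hs' with h | ⟨d, h⟩
      · exact ⟨i0, by omega⟩
      · have := hi0 d.1
        exact ⟨d.1, by omega⟩
    · rintro ⟨i, rfl⟩
      exact ⟨_, hcard ⟨i, 0⟩⟩
end

section
/- Let R be a Dedekind domain that is not a field such that Cl(R) is infinite and every class of Cl(R) contains infinitely many nonzero prime ideals of R. Then the system of sets of lengths of R is {L(a) | a ∈ R, a ≠ 0} = {{0}, {1}} ∪ {L ⊆ ℤ | L is a finite nonempty set with min L ≥ 2}. -/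
open scoped nonZeroDivisors

section Combi
variable {J : Type*} [Fintype J] [DecidableEq J] {α : J → Type*}

/-- propagate a predicate along single-coordinate changes outside the set `D`. -/
lemma propagate (Q : (∀ j, α j) → Prop) (D : J → Prop) (x y : ∀ j, α j)
    (hxy : ∀ j, D j → x j = y j)
    (hstep : ∀ z, (∀ j, D j → z j = x j) → Q z → ∀ j c, ¬ D j → Q (Function.update z j c))
    (hx : Q x) : Q y := by
  have key : ∀ s : Finset J, Q (s.piecewise y x) := by
    intro s
    induction s using Finset.induction_on with
    | empty => simpa using hx
    | insert j s hj ih =>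
      rw [Finset.piecewise_insert]
      have hag : ∀ j, D j → (s.piecewise y x) j = x j := by
        intro j hD
        by_cases h : j ∈ s
        · rw [Finset.piecewise_eq_of_mem _ _ _ h, hxy j hD]
        · rw [Finset.piecewise_eq_of_notMem _ _ _ h]
      by_cases hD : D j
      · have : y j = (s.piecewise y x) j := by rw [hag j hD, hxy j hD]
        rw [this, Function.update_eq_self]
        exact ih
      · exact hstep _ hag ih j _ hD
  simpa using key Finset.univ

/-- Parity condition on rectangles. -/
def RectEven (S : (∀ j, α j) → Prop) : Prop :=
  ∀ (x : ∀ j, α j) (j j' : J) (c : α j) (c' : α j'), j ≠ j' →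
    ((S x ↔ S (Function.update (Function.update x j c) j' c')) ↔
      (S (Function.update x j c) ↔ S (Function.update x j' c')))

def Rect {κ : Type*} (f : (∀ j, α j) → κ) : Prop :=
  ∀ (x : ∀ j, α j) (j j' : J) (c : α j) (c' : α j'), j ≠ j' →
    (f x = f (Function.update x j c) ∧
      f (Function.update x j' c') = f (Function.update (Function.update x j c) j' c')) ∨
    (f x = f (Function.update x j' c') ∧
      f (Function.update x j c) = f (Function.update (Function.update x j c) j' c')) ∨
    (f x = f (Function.update (Function.update x j c) j' c') ∧
      f (Function.update x j c) = f (Function.update x j' c'))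

lemma rect_of_even {κ : Type*} (f : (∀ j, α j) → κ)
    (h : ∀ v, RectEven (fun x => f x = v)) : Rect f := by
  intro x j j' c c' hjj
  have h1 := h (f x) x j j' c c' hjj
  have h2 := h (f (Function.update x j c)) x j j' c c' hjj
  have h3 := h (f (Function.update x j' c')) x j j' c c' hjj
  grind

lemma rect_pair {κ : Type*} {f : (∀ j, α j) → κ} (h : Rect f) (x y : ∀ j, α j) (j : J) (c : α j)
    (hne : f x ≠ f (Function.update x j c)) (hxy : x j = y j) :
    (f y = f x ∧ f (Function.update y j c) = f (Function.update x j c)) ∨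
    (f y = f (Function.update x j c) ∧ f (Function.update y j c) = f x) := by
  refine propagate (fun y => (f y = f x ∧ f (Function.update y j c) = f (Function.update x j c)) ∨
    (f y = f (Function.update x j c) ∧ f (Function.update y j c) = f x)) (fun d => d = j) x y
    (by rintro _ rfl; exact hxy) ?_ (Or.inl ⟨rfl, rfl⟩)
  intro z _ hQ d e hd
  have h1 := h z j d c e (Ne.symm hd)
  have h2 : Function.update (Function.update z d e) j c =
    Function.update (Function.update z j c) d e := Function.update_comm hd _ _ _
  rw [h2]
  grind

/-- pairs of changes in two different directions agree -/
lemma rect_pair_two {κ : Type*} {f : (∀ j, α j) → κ} (h : Rect f) (x y : ∀ j, α j) (j j' : J)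
    (c : α j) (c' : α j') (hjj : j ≠ j')
    (hne : f x ≠ f (Function.update x j c)) (hne' : f y ≠ f (Function.update y j' c')) :
    (f y = f x ∧ f (Function.update y j' c') = f (Function.update x j c)) ∨
    (f y = f (Function.update x j c) ∧ f (Function.update y j' c') = f x) := by
  let z := Function.update y j (x j)
  have h1 := rect_pair h x z j c hne (by simp [z])
  have h2 := rect_pair h x (Function.update z j' c') j c hne (by simp [z, hjj])
  have h3 := rect_pair h y z j' c' hne' (by simp [z, hjj.symm])
  grind

lemma rect_main {κ : Type*} {f : (∀ j, α j) → κ} (h : Rect f) [Nonempty (∀ j, α j)] :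
    (∃ j, ∀ x y, x j = y j → f x = f y) ∨ ∃ a b, ∀ z, f z = a ∨ f z = b := by
  by_cases h0 : ∃ (j j' : J) (x y : ∀ j, α j) (c : α j) (c' : α j'), j ≠ j' ∧
    f x ≠ f (Function.update x j c) ∧ f y ≠ f (Function.update y j' c')
  · right
    obtain ⟨j, j', x, y, c, c', hjj, hx, hy⟩ := h0
    refine ⟨f x, f (Function.update x j c), fun z => ?_⟩
    refine propagate (fun z => f z = f x ∨ f z = f (Function.update x j c)) (fun _ => False) x z
      (by simp) ?_ (Or.inl rfl)
    intro z _ hQ d e _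
    by_cases hz : f z = f (Function.update z d e)
    · rwa [← hz]
    have hA := rect_pair_two h x y j j' c c' hjj hx hy
    by_cases hd : d = j
    · subst hd
      have := rect_pair_two h y z j' d c' e hjj.symm hy hz
      grind
    · have := rect_pair_two h x z j d c e (Ne.symm hd) hx hz
      grind
  · push Not at h0
    by_cases h1 : ∃ (j : J) (x : ∀ j, α j) (c : α j), f x ≠ f (Function.update x j c)
    · left
      obtain ⟨j, x, c, hx⟩ := h1
      refine ⟨j, fun u v huv => ?_⟩
      refine propagate (fun v => f u = f v) (fun d => d = j) u v (by rintro _ rfl; exact huv) ?_ rfl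
      intro z _ hz d e hd
      rw [hz]
      exact h0 j d x z c e (Ne.symm hd) hx
    · right
      push Not at h1
      obtain ⟨x⟩ := ‹Nonempty (∀ j, α j)›
      refine ⟨f x, f x, fun z => Or.inl ?_⟩
      refine propagate (fun v => f v = f x) (fun _ => False) x z (by simp) ?_ rfl
      intro z _ hz d e _
      rw [← h1, hz]

end Combi

section Generic
variable {J : Type*} [Fintype J] [DecidableEq J] {α : J → Type*} [∀ j, Fintype (α j)]
  [∀ j, DecidableEq (α j)] {G : Type*} [CommGroup G]

def sliceGroup (α : J → Type*) [∀ j, Fintype (α j)]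
  [∀ j, DecidableEq (α j)] (G : Type*) [CommGroup G] : Subgroup ((∀ j, α j) → G) where
  carrier := {g | ∀ (j : J) (c : α j), ∏ i with i j = c, g i = 1}
  one_mem' := by intro j c; simp
  mul_mem' := by
    intro a b ha hb j c
    simp only [Pi.mul_apply, Finset.prod_mul_distrib]
    rw [ha j c, hb j c, one_mul]
  inv_mem' := by
    intro a ha j c
    simp only [Pi.inv_apply, Finset.prod_inv_distrib]
    rw [ha j c, inv_one]

def sumHom (S : Finset (∀ j, α j)) : sliceGroup α G →* G where
  toFun g := ∏ i ∈ S, g.1 i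
  map_one' := by simp
  map_mul' := by intro a b; simp [Finset.prod_mul_distrib]

def rectFun (x : ∀ j, α j) (j j' : J) (c : α j) (c' : α j') (t : G) : (∀ j, α j) → G :=
  Pi.mulSingle x t * Pi.mulSingle (Function.update (Function.update x j c) j' c') t *
    (Pi.mulSingle (Function.update x j c) t)⁻¹ * (Pi.mulSingle (Function.update x j' c') t)⁻¹

lemma prod_rectFun (x : ∀ j, α j) (j j' : J) (c : α j) (c' : α j') (t : G)
    (S : Finset (∀ j, α j)) :
    ∏ i ∈ S, rectFun x j j' c c' t i = (if x ∈ S then t else 1) *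
      (if Function.update (Function.update x j c) j' c' ∈ S then t else 1) *
      (if Function.update x j c ∈ S then t else 1)⁻¹ *
      (if Function.update x j' c' ∈ S then t else 1)⁻¹ := by
  simp only [rectFun, Pi.mul_apply, Pi.inv_apply, Finset.prod_mul_distrib, Finset.prod_inv_distrib,
    Finset.prod_pi_mulSingle']

lemma rectFun_mem (x : ∀ j, α j) (j j' : J) (c : α j) (c' : α j') (t : G) (hjj : j ≠ j') :
    rectFun x j j' c c' t ∈ sliceGroup α G := by
  intro d e
  rw [prod_rectFun]
  simp only [Finset.mem_filter, Finset.mem_univ, true_and]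
  by_cases h1 : d = j
  · subst h1
    simp only [Function.update_self, Function.update_of_ne hjj]
    split_ifs <;> simp
  · by_cases h2 : d = j'
    · subst h2
      simp only [Function.update_self, Function.update_of_ne h1]
      split_ifs <;> simp
    · simp only [Function.update_of_ne h1, Function.update_of_ne h2]
      split_ifs <;> simp

lemma infinite_range [Infinite G] (S : Finset (∀ j, α j)) (hS : ¬ RectEven (fun x => x ∈ S)) :
    (Set.range (sumHom (G := G) S)).Infinite := by
  unfold RectEven at hS
  push Not at hS
  obtain ⟨x, j, j', c, c', hjj, h⟩ := hS
  refine Set.infinite_of_injective_forall_mem (f := fun t : G =>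
    sumHom S ⟨rectFun x j j' c c' t, rectFun_mem x j j' c c' t hjj⟩) ?_ (fun t => ⟨_, rfl⟩)
  intro t t' htt
  simp only [sumHom, MonoidHom.coe_mk, OneHom.coe_mk, prod_rectFun] at htt
  by_cases h1 : x ∈ S <;> by_cases h2 : Function.update (Function.update x j c) j' c' ∈ S <;>
  by_cases h3 : Function.update x j c ∈ S <;> by_cases h4 : Function.update x j' c' ∈ S <;>
  simp_all

theorem exists_generic (α : J → Type*) [∀ j, Fintype (α j)]
    [∀ j, DecidableEq (α j)] (G : Type*) [CommGroup G] [Infinite G] :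
    ∃ g : (∀ j, α j) → G, (∀ (j : J) (c : α j), ∏ i with i j = c, g i = 1) ∧
      ∀ S : Finset (∀ j, α j), ∏ i ∈ S, g i = 1 → RectEven (fun x => x ∈ S) := by
  classical
  by_contra hcon
  push Not at hcon
  obtain ⟨S, hS, hfin⟩ := Subgroup.exists_finiteIndex_of_leftCoset_cover
    (G := sliceGroup α G) (s := {S : Finset (∀ j, α j) | ¬ RectEven (fun x => x ∈ S)})
    (H := fun S => (sumHom (G := G) S).ker) (g := fun _ => 1) (by
      ext g
      obtain ⟨S, h1, h2⟩ := hcon g.1 g.2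
      simp only [Set.mem_iUnion, Set.mem_univ, iff_true]
      exact ⟨S, by simpa using h2, ⟨g, h1, one_mul g⟩⟩)
  have h1 := infinite_range (G := G) S (by simpa using hS)
  have h2 := hfin.index_ne_zero
  rw [Subgroup.index_ker] at h2
  have : Finite (sumHom (G := G) S).range := Nat.finite_of_card_ne_zero h2
  exact h1 (Set.toFinite ((sumHom (G := G) S).range : Set G))

end Generic

section Ring

lemma split_primes {M : Type*} [CommMonoidWithZero M] [IsCancelMulZero M] [Subsingleton Mˣ]
    {I : Type*} [DecidableEq I] (P : I → M) (hP : ∀ i, Prime (P i)) {κ : Type*} [Fintype κ]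
    [DecidableEq κ] [Nonempty κ] (S : Finset I) :
    ∀ (D : κ → M), ∏ t, D t = ∏ i ∈ S, P i →
      ∃ f : I → κ, ∀ t, D t = ∏ i ∈ S with f i = t, P i := by
  induction S using Finset.induction_on with
  | empty =>
    intro D hD
    refine ⟨fun _ => Classical.arbitrary κ, fun t => ?_⟩
    have h1 : D t ∣ 1 := by
      have := Finset.dvd_prod_of_mem D (Finset.mem_univ t)
      rwa [hD, Finset.prod_empty] at this
    simpa using isUnit_iff_eq_one.1 (isUnit_of_dvd_one h1)
  | insert i0 S hi0 ih =>
    intro D hD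
    rw [Finset.prod_insert hi0] at hD
    obtain ⟨t0, _, E, hE⟩ := (hP i0).exists_mem_finset_dvd
      (show P i0 ∣ ∏ t, D t by rw [hD]; exact dvd_mul_right _ _)
    obtain ⟨f, hf⟩ := ih (Function.update D t0 E) (by
      apply mul_left_cancel₀ (hP i0).ne_zero
      rw [← hD, Finset.prod_update_of_mem (Finset.mem_univ t0), ← mul_assoc, ← hE,
        ← Finset.erase_eq, Finset.mul_prod_erase _ _ (Finset.mem_univ t0)])
    refine ⟨Function.update f i0 t0, fun t => ?_⟩
    have hfilt : ∀ t, ∏ i ∈ S with Function.update f i0 t0 i = t, P i =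
        ∏ i ∈ S with f i = t, P i := by
      intro t
      congr 1
      apply Finset.filter_congr
      intro i hi
      rw [Function.update_of_ne (by rintro rfl; exact hi0 hi)]
    rw [Finset.filter_insert]
    by_cases ht : t = t0
    · subst ht
      rw [if_pos (by simp), Finset.prod_insert (by simp [hi0]), hfilt, ← hf]
      simpa using hE
    · rw [if_neg (by simpa using Ne.symm ht), hfilt, ← hf, Function.update_of_ne ht]

section Domain
variable {R : Type*} [CommRing R]

lemma exists_fin_of_mem {a : R} {k : ℕ} (h : k ∈ setOfLengths a) :
    ∃ u : Fin k → R, (∀ t, Irreducible (u t)) ∧ ∏ t, u t = a := by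
  obtain ⟨s, hs, rfl, hprod⟩ := h
  induction s using Quotient.inductionOn with
  | h lst =>
    refine ⟨lst.get, fun t => hs _ (List.get_mem lst t), ?_⟩
    rw [← hprod]
    change ∏ t : Fin lst.length, lst.get t = (lst : Multiset R).prod
    rw [Multiset.prod_coe, ← List.prod_ofFn, List.ofFn_get]

lemma absorb {t : Multiset R} (ht : ∀ u ∈ t, Irreducible u) (h0 : t ≠ 0) {a : R}
    (h : Associated t.prod a) : Multiset.card t ∈ setOfLengths a := by
  obtain ⟨w, hw⟩ := h
  obtain ⟨b, hb⟩ := Multiset.exists_mem_of_ne_zero h0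
  obtain ⟨t', rfl⟩ := Multiset.exists_cons_of_mem hb
  refine ⟨(b * w) ::ₘ t', ?_, by simp, ?_⟩
  · intro v hv
    rcases Multiset.mem_cons.1 hv with rfl | hv
    · rw [irreducible_mul_units]; exact ht b hb
    · exact ht v (Multiset.mem_cons_of_mem hv)
  · rw [← hw, Multiset.prod_cons, Multiset.prod_cons]
    ring

lemma prod_absorb {k : ℕ} (hk : k ≠ 0) (u : Fin k → R) (hu : ∀ t, Irreducible (u t)) (a : R)
    (h : Associated (∏ t, u t) a) : k ∈ setOfLengths a := by
  have h1 := absorb (t := Finset.univ.val.map u) (a := a) (by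
    intro v hv
    obtain ⟨i, _, rfl⟩ := Multiset.mem_map.1 hv
    exact hu i) (by
    intro h0
    have := congrArg Multiset.card h0
    simp at this
    exact hk this) h
  simpa using h1

lemma lengths_mul_prime [IsDomain R] (p a : R) (hp : Prime p) (hau : ¬ IsUnit a) (k : ℕ) :
    k ∈ setOfLengths (p * a) ↔ ∃ n ∈ setOfLengths a, k = n + 1 := by
  constructor
  · rintro ⟨s, hs, rfl, hprod⟩
    obtain ⟨v, hv, hpv⟩ := hp.exists_mem_multiset_dvd (s := s) (hprod ▸ dvd_mul_right p a)
    obtain ⟨w, hw⟩ := hp.irreducible.associated_of_dvd (hs v hv) hpv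
    obtain ⟨t, rfl⟩ := Multiset.exists_cons_of_mem hv
    have ha : t.prod * w = a := by
      apply mul_left_cancel₀ hp.ne_zero
      rw [← hprod, Multiset.prod_cons, ← hw]
      ring
    refine ⟨Multiset.card t, absorb (fun u hu => hs u (Multiset.mem_cons_of_mem hu)) ?_ ⟨w, ha⟩,
      by simp⟩
    rintro rfl
    apply hau
    rw [← ha]
    simp
  · rintro ⟨n, ⟨s, hs, rfl, hprod⟩, rfl⟩
    refine ⟨p ::ₘ s, ?_, by simp, by simp [hprod]⟩
    intro u hu
    rcases Multiset.mem_cons.1 hu with rfl | hu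
    · exact hp.irreducible
    · exact hs u hu

lemma lengths_mul_prime_pow [IsDomain R] (p a : R) (hp : Prime p) (hau : ¬ IsUnit a) (n k : ℕ) :
    k ∈ setOfLengths (p ^ n * a) ↔ ∃ m ∈ setOfLengths a, k = m + n := by
  induction n generalizing k with
  | zero => simp
  | succ n ih =>
    rw [pow_succ', mul_assoc, lengths_mul_prime p _ hp
      (fun h => hau (isUnit_of_mul_isUnit_right h))]
    constructor
    · rintro ⟨m, hm, rfl⟩
      obtain ⟨m', hm', rfl⟩ := (ih m).1 hm
      exact ⟨m', hm', by omega⟩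
    · rintro ⟨m, hm, rfl⟩
      exact ⟨m + n, (ih _).2 ⟨m, hm, rfl⟩, by omega⟩

lemma lengths_irreducible {a : R} (ha : Irreducible a) : setOfLengths a = {1} := by
  ext k
  constructor
  · rintro ⟨s, hs, rfl, hprod⟩
    rw [Set.mem_singleton_iff]
    have h0 : s ≠ 0 := by
      rintro rfl
      apply ha.not_isUnit
      rw [← hprod]; simp
    obtain ⟨b, hb⟩ := Multiset.exists_mem_of_ne_zero h0
    obtain ⟨t, rfl⟩ := Multiset.exists_cons_of_mem hb
    rw [Multiset.prod_cons] at hprod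
    rcases ha.isUnit_or_isUnit hprod.symm with h | h
    · exact absurd h (hs b hb).not_isUnit
    · by_cases ht : t = 0
      · simp [ht]
      · obtain ⟨c, hc⟩ := Multiset.exists_mem_of_ne_zero ht
        exact absurd (isUnit_of_dvd_unit (Multiset.dvd_prod hc) h)
          (hs c (Multiset.mem_cons_of_mem hc)).not_isUnit
  · rintro rfl
    exact ⟨{a}, by simpa using ha, by simp, by simp⟩

end Domain

lemma lengths_finite {R : Type*} [CommRing R] [IsDedekindDomain R] {a : R} (ha : a ≠ 0) :
    (setOfLengths a).Finite := by
  classical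
  refine (Set.finite_Iic (Multiset.card
    (UniqueFactorizationMonoid.normalizedFactors (Ideal.span {a})))).subset ?_
  rintro k ⟨s, hs, rfl, rfl⟩
  rw [Set.mem_Iic]
  clear ha
  induction s using Multiset.induction_on with
  | empty => simp
  | cons b t ih =>
    have hb := hs b (Multiset.mem_cons_self b t)
    have ih := ih (fun u hu => hs u (Multiset.mem_cons_of_mem hu))
    have ht0 : t.prod ≠ 0 := Multiset.prod_ne_zero
      (fun h => (hs 0 (Multiset.mem_cons_of_mem h)).ne_zero rfl)
    rw [Multiset.prod_cons, ← Ideal.span_singleton_mul_span_singleton,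
      UniqueFactorizationMonoid.normalizedFactors_mul (by simpa using hb.ne_zero)
        (by simpa using ht0), Multiset.card_add, Multiset.card_cons]
    have : 0 < Multiset.card (UniqueFactorizationMonoid.normalizedFactors (Ideal.span {b})) := by
      rw [Multiset.card_pos]
      obtain ⟨p, hp⟩ := UniqueFactorizationMonoid.exists_mem_normalizedFactors
        (x := Ideal.span {b}) (by simpa using hb.ne_zero)
        (by rw [Ideal.isUnit_iff, Ideal.span_singleton_eq_top]; exact hb.not_isUnit)
      intro h
      rw [h] at hp
      simp at hp
    omega

variable {R : Type*} [CommRing R] [IsDedekindDomain R]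

lemma principal_iff {I : Type*} (P : I → (Ideal R)⁰) (S : Finset I) :
    ∏ i ∈ S, ClassGroup.mk0 (P i) = 1 ↔ ∃ u : R, Ideal.span {u} = ∏ i ∈ S, (P i : Ideal R) := by
  rw [← map_prod, ClassGroup.mk0_eq_one_iff, Submodule.isPrincipal_iff]
  simp only [Submonoid.coe_finsetProd]
  exact exists_congr fun u => eq_comm

lemma isUnit_of_empty {u : R} (h : Ideal.span {u} = (1 : Ideal R)) : IsUnit u := by
  rwa [Ideal.one_eq_top, Ideal.span_singleton_eq_top] at h

lemma prod_ne_one {I : Type*} (P : I → Ideal R) (hP : ∀ i, Prime (P i)) (S : Finset I)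
    (h : ∏ i ∈ S, P i = 1) : S = ∅ := by
  by_contra hne
  obtain ⟨i, hi⟩ := Finset.nonempty_iff_ne_empty.2 hne
  have := Finset.dvd_prod_of_mem P hi
  rw [h] at this
  exact (hP i).not_isUnit (isUnit_of_dvd_one this)

/-- An irreducible element has minimal support. -/
lemma min_of_irreducible {I : Type*} [DecidableEq I] (P : I → (Ideal R)⁰)
    (hP : ∀ i, Prime (P i : Ideal R)) (S : Finset I)
    (u : R) (hu : Ideal.span {u} = ∏ i ∈ S, (P i : Ideal R)) (hirr : Irreducible u)
    (T : Finset I) (hTS : T ⊆ S) (hT : ∏ i ∈ T, ClassGroup.mk0 (P i) = 1) : T = ∅ ∨ T = S := by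
  have hS := (principal_iff P S).2 ⟨u, hu⟩
  have hT' : ∏ i ∈ S \ T, ClassGroup.mk0 (P i) = 1 := by
    rw [← Finset.prod_sdiff hTS, hT, mul_one] at hS
    exact hS
  obtain ⟨x, hx⟩ := (principal_iff P T).1 hT
  obtain ⟨y, hy⟩ := (principal_iff P _).1 hT'
  have hxy : Associated (y * x) u := by
    rw [← Ideal.span_singleton_eq_span_singleton, ← Ideal.span_singleton_mul_span_singleton, hx, hy,
      hu, Finset.prod_sdiff hTS]
  have := (hxy.irreducible_iff.2 hirr).isUnit_or_isUnit rfl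
  rcases this with h | h
  · right
    rw [← Ideal.span_singleton_eq_top, hy, ← Ideal.one_eq_top] at h
    have := prod_ne_one _ hP _ h
    exact Finset.Subset.antisymm hTS (Finset.sdiff_eq_empty_iff_subset.1 this)
  · left
    rw [← Ideal.span_singleton_eq_top, hx, ← Ideal.one_eq_top] at h
    exact prod_ne_one _ hP _ h

lemma irreducible_of_min {I : Type*} [DecidableEq I] (P : I → (Ideal R)⁰)
    (hP : ∀ i, Prime (P i : Ideal R)) (S : Finset I) (hS : S.Nonempty)
    (u : R) (hu : Ideal.span {u} = ∏ i ∈ S, (P i : Ideal R))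
    (hmin : ∀ T ⊆ S, ∏ i ∈ T, ClassGroup.mk0 (P i) = 1 → T = ∅ ∨ T = S) : Irreducible u := by
  refine ⟨fun h => ?_, fun x y hxy => ?_⟩
  · rw [← Ideal.span_singleton_eq_top, hu, ← Ideal.one_eq_top] at h
    exact hS.ne_empty (prod_ne_one _ hP _ h)
  · rw [hxy, ← Ideal.span_singleton_mul_span_singleton] at hu
    obtain ⟨f, hf⟩ := split_primes (fun i => (P i : Ideal R)) hP S
      (fun b : Bool => bif b then Ideal.span {x} else Ideal.span {y}) (by simpa using hu)
    have h1 := hf true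
    have h2 := hf false
    simp only [cond_true, cond_false] at h1 h2
    rcases hmin _ (Finset.filter_subset _ _) ((principal_iff P _).2 ⟨x, h1⟩) with h | h
    · left
      rw [h, Finset.prod_empty] at h1
      exact isUnit_of_empty h1
    · right
      have : (S.filter fun i => f i = false) = ∅ := by
        rw [Finset.filter_eq_empty_iff]
        intro i hi
        rw [Finset.filter_eq_self] at h
        simp [h i hi]
      rw [this, Finset.prod_empty] at h2
      exact isUnit_of_empty h2

theorem grid_lengths [Infinite (ClassGroup R)]
    (hprimes : ∀ g : ClassGroup R, ∃ P : (Ideal R)⁰, (P : Ideal R).IsPrime ∧ ClassGroup.mk0 P = g)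
    {J : Type*} [Fintype J] [DecidableEq J] (l : J → ℕ) (hl : ∀ j, 2 ≤ l j) (j0 : J)
    (hj0 : l j0 = 2) : ∃ a : R, a ≠ 0 ∧ ¬ IsUnit a ∧ setOfLengths a = Set.range l := by
  classical
  obtain ⟨g, hslice, hgen⟩ := exists_generic (fun j => Fin (l j)) (ClassGroup R)
  choose P hPp hPg using fun i => hprimes (g i)
  have hP : ∀ i, Prime (P i : Ideal R) := fun i =>
    Ideal.prime_of_isPrime (mem_nonZeroDivisors_iff_ne_zero.1 (P i).2) (hPp i)
  have hcl : ∀ S : Finset (∀ j, Fin (l j)), ∏ i ∈ S, ClassGroup.mk0 (P i) = ∏ i ∈ S, g i :=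
    fun S => Finset.prod_congr rfl fun i _ => hPg i
  have hzero : ∀ j, 0 < l j := fun j => by have := hl j; omega
  have hne : Nonempty (∀ j, Fin (l j)) := ⟨fun j => ⟨0, hzero j⟩⟩
  -- dichotomy
  have key : ∀ (κ : Type) [DecidableEq κ] (f : (∀ j, Fin (l j)) → κ),
      (∀ t, ∏ i with f i = t, g i = 1) →
      (∃ j, ∀ x y, x j = y j → f x = f y) ∨ ∃ a b, ∀ z, f z = a ∨ f z = b := by
    intro κ _ f hf
    apply rect_main
    apply rect_of_even
    intro v
    have := hgen _ (hf v)
    simpa using this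
  have hother : ∀ j (c : Fin (l j)), ∃ c' : Fin (l j), c' ≠ c := by
    intro j c
    have : Nontrivial (Fin (l j)) := Fin.nontrivial_iff_two_le.2 (hl j)
    exact exists_ne c
  have hslne : ∀ j (c : Fin (l j)), (Finset.univ.filter fun i : ∀ j, Fin (l j) => i j = c).Nonempty := by
    intro j c
    exact ⟨Function.update (Classical.arbitrary _) j c, by simp⟩
  -- slices are minimal
  have hmin : ∀ j (c : Fin (l j)), ∀ T ⊆ Finset.univ.filter fun i : ∀ j, Fin (l j) => i j = c,
      ∏ i ∈ T, g i = 1 → T = ∅ ∨ T = Finset.univ.filter fun i : ∀ j, Fin (l j) => i j = c := by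
    intro j c T hTS hT
    by_contra hcon
    push Not at hcon
    obtain ⟨hT0, hT1⟩ := hcon
    obtain ⟨t, ht⟩ := hT0
    obtain ⟨s, hs, hsT⟩ := Finset.exists_of_ssubset (Finset.ssubset_iff_subset_ne.2 ⟨hTS, hT1⟩)
    have htj : t j = c := by simpa using hTS ht
    have hsj : s j = c := by simpa using hs
    let f : (∀ j, Fin (l j)) → Option (Fin (l j)) := fun i => if i ∈ T then none else some (i j)
    have hft : f t = none := by simp [f, ht]
    have hfs : f s = some c := by simp [f, hsT, hsj]
    have hfo : ∀ x, x j ≠ c → f x = some (x j) := by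
      intro x hx
      have : x ∉ T := fun h => hx (by simpa using hTS h)
      simp [f, this]
    obtain ⟨c', hc'⟩ := hother j c
    have hf' : f (Function.update t j c') = some c' := by
      rw [hfo _ (by simpa using hc')]; simp
    rcases key _ f (by
      intro v
      rcases v with _ | d
      · have : (Finset.univ.filter fun i => f i = none) = T := by
          ext i; simp [f]
        rw [this, hT]
      · by_cases hd : d = c
        · subst hd
          have : (Finset.univ.filter fun i => f i = some d) =
              (Finset.univ.filter fun i : ∀ j, Fin (l j) => i j = d) \ T := by
            ext i
            by_cases hi : i ∈ T <;> simp [f, hi]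
          rw [this]
          have h3 := hslice j d
          rw [← Finset.prod_sdiff hTS, hT, mul_one] at h3
          exact h3
        · have : (Finset.univ.filter fun i => f i = some d) =
              (Finset.univ.filter fun i : ∀ j, Fin (l j) => i j = d) := by
            ext i
            by_cases hi : i ∈ T
            · have : i j = c := by simpa using hTS hi
              simp [f, hi, this, Ne.symm hd]
            · simp [f, hi]
          rw [this]
          exact hslice j d) with ⟨j', hj'⟩ | ⟨a, b, hab⟩
    · by_cases hjj : j' = j
      · subst hjj
        have := hj' t s (by rw [htj, hsj])
        rw [hft, hfs] at this
        exact absurd this (by simp)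
      · have := hj' t (Function.update t j c') (by rw [Function.update_of_ne hjj])
        rw [hft, hf'] at this
        exact absurd this (by simp)
    · have h1 := hab t
      have h2 := hab s
      have h3 := hab (Function.update t j c')
      rw [hft] at h1
      rw [hfs] at h2
      rw [hf'] at h3
      grind
  have htot : ∏ i, g i = 1 := by
    rw [← Finset.prod_fiberwise Finset.univ (fun i : ∀ j, Fin (l j) => i j0) g]
    exact Finset.prod_eq_one fun c _ => hslice j0 c
  obtain ⟨a, ha⟩ := (principal_iff P Finset.univ).1 (by rw [hcl, htot])
  have ha0 : a ≠ 0 := by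
    rintro rfl
    rw [Ideal.span_singleton_eq_bot.2 rfl] at ha
    exact Finset.prod_ne_zero_iff.2 (fun i _ => (hP i).ne_zero) ha.symm
  have hau : ¬ IsUnit a := by
    intro h
    rw [← Ideal.span_singleton_eq_top, ha, ← Ideal.one_eq_top] at h
    exact Finset.univ_nonempty.ne_empty (prod_ne_one _ hP _ h)
  have hair : ¬ Irreducible a := by
    intro h
    have h0 : Fin (l j0) := ⟨0, hzero j0⟩
    rcases min_of_irreducible P hP _ a ha h _ (Finset.subset_univ _)
      (by rw [hcl]; exact hslice j0 h0) with h | h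
    · exact (hslne j0 h0).ne_empty h
    · obtain ⟨c', hc'⟩ := hother j0 h0
      obtain ⟨i, hi⟩ := hslne j0 c'
      have : i ∈ Finset.univ.filter fun i : ∀ j, Fin (l j) => i j0 = h0 := by rw [h]; simp
      simp at this hi
      exact hc' (hi.symm.trans this)
  refine ⟨a, ha0, hau, ?_⟩
  ext k
  constructor
  · rintro ⟨s, hs, hcard, hprod⟩
    obtain ⟨u, hu, hprod⟩ := exists_fin_of_mem ⟨s, hs, hcard, hprod⟩
    have hk0 : k ≠ 0 := by
      rintro rfl
      apply hau
      rw [← hprod]; simp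
    have hk1 : k ≠ 1 := by
      rintro rfl
      apply hair
      rw [← hprod]
      simpa using hu 0
    have : NeZero k := ⟨hk0⟩
    obtain ⟨f, hf⟩ := split_primes (fun i => (P i : Ideal R)) hP Finset.univ
      (fun t => Ideal.span {u t}) (by rw [Ideal.prod_span_singleton, hprod, ha])
    have hfib : ∀ t, ∏ i with f i = t, g i = 1 := fun t => by
      rw [← hcl]
      exact (principal_iff P _).2 ⟨u t, hf t⟩
    have hsurj : Function.Surjective f := by
      intro t
      by_contra hcon
      push Not at hcon
      have h1 := hf t
      rw [Finset.filter_eq_empty_iff.2 (fun i _ => hcon i), Finset.prod_empty] at h1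
      exact (hu t).not_isUnit (isUnit_of_empty h1)
    rcases key _ f hfib with ⟨j, hj⟩ | ⟨b, c, hbc⟩
    · refine ⟨j, ?_⟩
      let h : Fin (l j) → Fin k := fun c => f (Function.update (Classical.arbitrary _) j c)
      have hh : ∀ i, f i = h (i j) := fun i => hj _ _ (by simp)
      have hbij : Function.Bijective h := by
        constructor
        · intro c c' hcc
          by_contra hne
          rcases min_of_irreducible P hP _ (u (h c)) (hf (h c)) (hu _)
            (Finset.univ.filter fun i : ∀ j, Fin (l j) => i j = c) (by
              intro i hi
              simp only [Finset.mem_filter, Finset.mem_univ, true_and] at hi ⊢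
              rw [hh, hi]) (by rw [hcl]; exact hslice j c) with h1 | h1
          · exact (hslne j c).ne_empty h1
          · obtain ⟨i, hi⟩ := hslne j c'
            simp only [Finset.mem_filter, Finset.mem_univ, true_and] at hi
            have : i ∈ Finset.univ.filter fun i : ∀ j, Fin (l j) => i j = c := by
              rw [h1]; simp only [Finset.mem_filter, Finset.mem_univ, true_and]
              rw [hh, hi, hcc]
            simp only [Finset.mem_filter, Finset.mem_univ, true_and] at this
            exact hne (this.symm.trans hi)
        · intro t
          obtain ⟨i, rfl⟩ := hsurj t
          exact ⟨i j, (hh i).symm⟩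
      simpa using Fintype.card_of_bijective hbij
    · refine ⟨j0, ?_⟩
      have : (Finset.univ : Finset (Fin k)) ⊆ {b, c} := by
        intro t _
        obtain ⟨i, rfl⟩ := hsurj t
        simpa using hbc i
      have h1 := (Finset.card_le_card this).trans Finset.card_le_two
      simp at h1
      omega
  · rintro ⟨j, rfl⟩
    choose u hu using fun c => (principal_iff P _).1
      (show ∏ i ∈ Finset.univ.filter (fun i : ∀ j, Fin (l j) => i j = c),
        ClassGroup.mk0 (P i) = 1 by rw [hcl]; exact hslice j c)
    refine prod_absorb (hzero j).ne' u (fun c => ?_) a ?_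
    · refine irreducible_of_min P hP _ (hslne j c) (u c) (hu c) ?_
      intro T hT h1
      rw [hcl] at h1
      exact hmin j c T hT h1
    · rw [← Ideal.span_singleton_eq_span_singleton, ha, ← Ideal.prod_span_singleton]
      simp only [hu]
      exact Finset.prod_fiberwise Finset.univ (fun i : ∀ j, Fin (l j) => i j)
        (fun i => (P i : Ideal R))

end Ring

open scoped Classical in
/-- **Corollary 4.4(2), system of sets of lengths.** Let `R` be a Dedekind domain, not a
field, with infinite class group such that every class contains infinitely many nonzero
prime ideals. Then the system of sets of lengths of `R` (with the convention
`L(a) = {0}` for units `a`) is `{{0}, {1}}` together with all finite nonempty subsets of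
`ℕ` whose elements are all at least `2`. -/
theorem system_of_sets_of_lengths {R : Type*} [CommRing R] [IsDedekindDomain R]
    (hR : ¬ IsField R) (hinf : Infinite (ClassGroup R))
    (hprimes : ∀ g : ClassGroup R,
      {P : (Ideal R)⁰ | (P : Ideal R).IsPrime ∧ ClassGroup.mk0 P = g}.Infinite) :
    {L : Set ℕ | ∃ a : R, a ≠ 0 ∧
        L = if IsUnit a then ({0} : Set ℕ) else setOfLengths a} =
      {({0} : Set ℕ), ({1} : Set ℕ)} ∪
        {L : Set ℕ | L.Finite ∧ L.Nonempty ∧ ∀ k ∈ L, 2 ≤ k} := by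
  have hprimes' : ∀ g : ClassGroup R,
      ∃ P : (Ideal R)⁰, (P : Ideal R).IsPrime ∧ ClassGroup.mk0 P = g :=
    fun g => (hprimes g).nonempty
  obtain ⟨p, hp⟩ : ∃ p : R, Prime p := by
    obtain ⟨P, hP, h1⟩ := hprimes' 1
    rw [ClassGroup.mk0_eq_one_iff, Submodule.isPrincipal_iff] at h1
    obtain ⟨p, hp⟩ := h1
    have hp0 : p ≠ 0 := by
      rintro rfl
      apply mem_nonZeroDivisors_iff_ne_zero.1 P.2
      rw [hp]
      simp
    refine ⟨p, (Ideal.span_singleton_prime hp0).1 ?_⟩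
    rw [hp] at hP
    exact hP
  ext L
  constructor
  · rintro ⟨a, ha0, rfl⟩
    by_cases hu : IsUnit a
    · rw [if_pos hu]
      simp
    rw [if_neg hu]
    by_cases hirr : Irreducible a
    · rw [lengths_irreducible hirr]
      simp
    right
    refine ⟨lengths_finite ha0, ?_, ?_⟩
    · obtain ⟨f, hf, hprod, _⟩ := (WfDvdMonoid.not_isUnit_iff_exists_factors_eq a ha0).1 hu
      exact ⟨_, f, hf, rfl, hprod⟩
    · rintro k ⟨s, hs, rfl, hprod⟩
      by_contra hlt
      have : Multiset.card s = 0 ∨ Multiset.card s = 1 := by omega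
      rcases this with h | h
      · rw [Multiset.card_eq_zero] at h
        subst h
        apply hu
        rw [← hprod]; simp
      · obtain ⟨b, rfl⟩ := Multiset.card_eq_one.1 h
        apply hirr
        rw [← hprod]
        simpa using hs
  · rintro ((rfl | rfl) | ⟨hfin, hne, h2⟩)
    · exact ⟨1, one_ne_zero, by simp⟩
    · refine ⟨p, hp.ne_zero, ?_⟩
      rw [if_neg hp.not_isUnit, lengths_irreducible hp.irreducible]
    · have hm := Nat.sInf_mem hne
      set m := sInf L with hmdef
      have hm2 := h2 m hm
      have hmle : ∀ k ∈ L, m ≤ k := fun k hk => Nat.sInf_le hk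
      have : Fintype L := hfin.fintype
      obtain ⟨a, ha0, hau, hL⟩ := grid_lengths hprimes' (J := L) (fun j => j.1 - (m - 2))
        (fun j => by have := hmle j.1 j.2; omega) ⟨m, hm⟩ (by simp only; omega)
      refine ⟨p ^ (m - 2) * a, mul_ne_zero (pow_ne_zero _ hp.ne_zero) ha0, ?_⟩
      rw [if_neg (fun h => hau (isUnit_of_mul_isUnit_right h))]
      ext k
      rw [lengths_mul_prime_pow p a hp hau, hL]
      constructor
      · intro hk
        have := hmle k hk
        exact ⟨k - (m - 2), ⟨⟨k, hk⟩, rfl⟩, by omega⟩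
      · rintro ⟨_, ⟨⟨j, hj⟩, rfl⟩, rfl⟩
        have := hmle j hj
        have h3 : j - (m - 2) + (m - 2) = j := by omega
        simpa only [h3] using hj
end
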